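/- The number of 2-dimensional subspaces W ⊆ E_3 such that no nonzero element of W has a 2-element representative equals 105. (These correspond to Klein coverings of hyperelliptic genus 3 curves of type II.1, with generators η = w_1 − w_2 + w_3 − w_4, ξ = w_1 − w_2 + w_5 − w_6; the degree of the forgetful map on this component is 105.) -/

import Mathlib

/-!
A nonzero class of `E3` is represented either by 2- and 6-element subsets or by 4-element subsets,
so the subspaces to be counted are the planes whose three nonzero elements are classes of 4-element
subsets. They are counted through their ordered bases. A plane over `F_2` has
`(4 - 1) * (4 - 2) = 6` of them (`card_linearIndependent`), and a pair `(x, y)` is an ordered basis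
of such a plane if and only if `x`, `y` and `x + y` are all classes of 4-element subsets
(`basis_iff`). Every class has exactly one representative avoiding the point `7`, so these pairs
correspond to pairs `(A, B)` of 4-element subsets avoiding `7` whose symmetric difference also has
4 elements (`card_pairs`). There are `35 * 18 = 630 = 6 * 105` such pairs.
-/

open Finset Submodule

noncomputable section

def sumMap : (Fin 8 → ZMod 2) →ₗ[ZMod 2] ZMod 2 where
  toFun v := ∑ i, v i
  map_add' v w := by simp [Finset.sum_add_distrib]
  map_smul' c v := by simp [Finset.mul_sum]

def V3 : Submodule (ZMod 2) (Fin 8 → ZMod 2) := LinearMap.ker sumMap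

@[simp] lemma sumMap_apply (v : Fin 8 → ZMod 2) : sumMap v = ∑ i, v i := rfl

lemma mem_V3 (v : Fin 8 → ZMod 2) : v ∈ V3 ↔ ∑ i, v i = 0 := by
  simp [V3, LinearMap.mem_ker]

def onesV : V3 := ⟨fun _ => 1, by rw [mem_V3]; decide⟩

abbrev E3 := V3 ⧸ span (ZMod 2) {onesV}

def indFun (S : Finset (Fin 8)) : Fin 8 → ZMod 2 := fun i => if i ∈ S then 1 else 0

open Classical in
def cls (S : Finset (Fin 8)) : E3 :=
  if h : indFun S ∈ V3 then Submodule.Quotient.mk (⟨indFun S, h⟩ : V3) else 0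

/-- `x` has a `k`-element representative -/
def hasRep (k : ℕ) (x : E3) : Prop := ∃ S : Finset (Fin 8), S.card = k ∧ cls S = x

open scoped symmDiff

lemma indFun_mem (A : Finset (Fin 8)) : indFun A ∈ V3 ↔ Even A.card := by
  rw [mem_V3]
  simp [indFun, ZMod.natCast_eq_zero_iff_even]

lemma cls_of_even {A : Finset (Fin 8)} (h : Even A.card) :
    cls A = Submodule.Quotient.mk (⟨indFun A, (indFun_mem A).2 h⟩ : V3) := by
  rw [cls, dif_pos]

lemma indFun_symmDiff (A B : Finset (Fin 8)) : indFun (A ∆ B) = indFun A + indFun B := by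
  funext i
  by_cases ha : i ∈ A <;> by_cases hb : i ∈ B <;>
    simp [indFun, Finset.mem_symmDiff, ha, hb]
  decide

lemma even_symmDiff {A B : Finset (Fin 8)} (hA : Even A.card) (hB : Even B.card) :
    Even (A ∆ B).card := by
  rw [← indFun_mem] at *
  rw [indFun_symmDiff]
  exact V3.add_mem hA hB

lemma even_compl {A : Finset (Fin 8)} (hA : Even A.card) : Even Aᶜ.card := by
  rw [Finset.card_compl, Fintype.card_fin]
  obtain ⟨k, hk⟩ := hA
  exact ⟨4 - k, by omega⟩

lemma cls_symmDiff {A B : Finset (Fin 8)} (hA : Even A.card) (hB : Even B.card) :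
    cls (A ∆ B) = cls A + cls B := by
  rw [cls_of_even hA, cls_of_even hB, cls_of_even (even_symmDiff hA hB),
    ← Submodule.Quotient.mk_add]
  congr 1
  exact Subtype.ext (indFun_symmDiff A B)

lemma cls_eq_iff {A B : Finset (Fin 8)} (hA : Even A.card) (hB : Even B.card) :
    cls A = cls B ↔ A = B ∨ A = Bᶜ := by
  rw [cls_of_even hA, cls_of_even hB, Submodule.Quotient.eq, Submodule.mem_span_singleton]
  have key : ∀ c : ZMod 2, c • onesV = (⟨indFun A, (indFun_mem A).2 hA⟩ : V3) -
      ⟨indFun B, (indFun_mem B).2 hB⟩ ↔ ∀ i, c = indFun A i - indFun B i := by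
    intro c
    rw [Subtype.ext_iff, funext_iff]
    simp [onesV]
  simp only [key, Finset.ext_iff, Finset.mem_compl]
  have h2 : ∀ c : ZMod 2, c = 0 ∨ c = 1 := by decide
  constructor
  · rintro ⟨c, hc⟩
    rcases h2 c with rfl | rfl
    · left
      intro i
      specialize hc i
      by_cases ha : i ∈ A <;> by_cases hb : i ∈ B <;> simp [indFun, ha, hb] at hc ⊢
    · right
      intro i
      specialize hc i
      by_cases ha : i ∈ A <;> by_cases hb : i ∈ B <;> simp [indFun, ha, hb] at hc ⊢
  · rintro (h | h)
    · refine ⟨0, fun i => ?_⟩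
      simp [indFun, h i]
    · refine ⟨1, fun i => ?_⟩
      by_cases hb : i ∈ B <;> simp [indFun, h i, hb]

lemma exists_rep (x : E3) : ∃ A : Finset (Fin 8), Even A.card ∧ 7 ∉ A ∧ cls A = x := by
  obtain ⟨v, rfl⟩ := Submodule.Quotient.mk_surjective _ x
  have h2 : ∀ c : ZMod 2, c ≠ 0 → c = 1 := by decide
  have hv : indFun (univ.filter fun i => v.1 i ≠ 0) = v.1 := by
    funext i
    by_cases h : v.1 i = 0
    · simp [indFun, h]
    · simp [indFun, h2 _ h]
  have he : Even (univ.filter fun i => v.1 i ≠ 0).card := by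
    rw [← indFun_mem, hv]
    exact v.2
  have hc : cls (univ.filter fun i => v.1 i ≠ 0) = Submodule.Quotient.mk v := by
    rw [cls_of_even he]
    congr 1
    exact Subtype.ext hv
  generalize (univ.filter fun i => v.1 i ≠ 0) = A at he hc
  by_cases h7 : 7 ∈ A
  · exact ⟨Aᶜ, even_compl he, by simpa using h7,
      ((cls_eq_iff (even_compl he) he).2 (Or.inr rfl)).trans hc⟩
  · exact ⟨A, he, h7, hc⟩

/-- The nonzero classes without a 2-element representative. -/
def IsQuad (x : E3) : Prop := x ≠ 0 ∧ ¬ hasRep 2 x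

lemma isQuad_cls {A : Finset (Fin 8)} (hA : Even A.card) : IsQuad (cls A) ↔ A.card = 4 := by
  have h0 : cls ∅ = 0 := by
    have := cls_symmDiff (A := ∅) (B := ∅) (by simp) (by simp)
    simpa using this
  have hc : A.card + Aᶜ.card = 8 := Finset.card_add_card_compl A
  have hz : cls A = 0 ↔ A.card = 0 ∨ A.card = 8 := by
    rw [← h0, cls_eq_iff hA (by simp)]
    simp only [Finset.card_eq_zero, Finset.compl_empty]
    rw [← Finset.card_eq_iff_eq_univ, Fintype.card_fin]
  have h2 : hasRep 2 (cls A) ↔ A.card = 2 ∨ A.card = 6 := by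
    constructor
    · rintro ⟨S, hS, h⟩
      rcases (cls_eq_iff (by rw [hS]; decide) hA).1 h with rfl | rfl
      · exact Or.inl hS
      · right; omega
    · rintro (h | h)
      · exact ⟨A, h, rfl⟩
      · exact ⟨Aᶜ, by omega, (cls_eq_iff (even_compl hA) hA).2 (Or.inr rfl)⟩
  rw [IsQuad, Ne, hz, h2]
  obtain ⟨k, hk⟩ := hA
  omega

lemma basis_iff (s : Fin 2 → E3) :
    (LinearIndependent (ZMod 2) s ∧ ∀ x ∈ span (ZMod 2) (Set.range s), x ≠ 0 → ¬ hasRep 2 x) ↔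
      IsQuad (s 0) ∧ IsQuad (s 1) ∧ IsQuad (s 0 + s 1) := by
  obtain ⟨x, y, rfl⟩ : ∃ x y, s = ![x, y] := ⟨s 0, s 1, by ext i; fin_cases i <;> rfl⟩
  have h2 : ∀ c : ZMod 2, c = 0 ∨ c = 1 := by decide
  rw [LinearIndependent.pair_iff, Matrix.range_cons_cons_empty]
  simp only [mem_span_pair, Matrix.cons_val_zero, Matrix.cons_val_one]
  constructor
  · rintro ⟨hli, hq⟩
    have key : ∀ a b : ZMod 2, ¬(a = 0 ∧ b = 0) → IsQuad (a • x + b • y) := fun a b hab =>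
      have hne : a • x + b • y ≠ 0 := fun h => hab (hli a b h)
      ⟨hne, hq _ ⟨a, b, rfl⟩ hne⟩
    exact ⟨by simpa using key 1 0, by simpa using key 0 1, by simpa using key 1 1⟩
  · rintro ⟨hx, hy, hxy⟩
    constructor
    · intro a b h
      rcases h2 a with rfl | rfl <;> rcases h2 b with rfl | rfl
      · simp
      · exact absurd (by simpa using h) hy.1
      · exact absurd (by simpa using h) hx.1
      · exact absurd (by simpa using h) hxy.1
    · rintro _ ⟨a, b, rfl⟩ hne
      rcases h2 a with rfl | rfl <;> rcases h2 b with rfl | rfl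
      · simp at hne
      · simpa using hy.2
      · simpa using hx.2
      · simpa using hxy.2

/-- Pairs of 4-element subsets avoiding the point `7` whose symmetric difference has 4 elements. -/
def quadPairs : Finset (Finset (Fin 8) × Finset (Fin 8)) :=
  (((powersetCard 4 univ).filter (7 ∉ ·)) ×ˢ ((powersetCard 4 univ).filter (7 ∉ ·))).filter
    fun p => (p.1 ∆ p.2).card = 4

lemma card_quadPairs : quadPairs.card = 630 := by
  decide +kernel

lemma mem_quadPairs (p : Finset (Fin 8) × Finset (Fin 8)) : p ∈ quadPairs ↔
    ((p.1.card = 4 ∧ 7 ∉ p.1) ∧ (p.2.card = 4 ∧ 7 ∉ p.2)) ∧ (p.1 ∆ p.2).card = 4 := by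
  simp [quadPairs, mem_powersetCard]

/-- Representatives avoiding `7` are unique, since complementation exchanges the subsets
containing `7` with those avoiding it. -/
lemma cls_inj {A B : Finset (Fin 8)} (hA : Even A.card) (hB : Even B.card) (h7 : 7 ∉ A)
    (h7' : 7 ∉ B) (h : cls A = cls B) : A = B := by
  rcases (cls_eq_iff hA hB).1 h with h | rfl
  · exact h
  · exact absurd h7' (by simpa using h7)

lemma card_pairs :
    Nat.card {s : Fin 2 → E3 // IsQuad (s 0) ∧ IsQuad (s 1) ∧ IsQuad (s 0 + s 1)} = 630 := by
  have hev : ∀ {A : Finset (Fin 8)}, A.card = 4 → Even A.card := fun h => by rw [h]; decide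
  rw [← card_quadPairs, ← Nat.card_eq_finsetCard]
  symm
  refine Nat.card_eq_of_bijective (fun p => ⟨![cls p.1.1, cls p.1.2], ?_⟩) ⟨?_, ?_⟩
  · obtain ⟨⟨⟨hA, -⟩, hB, -⟩, hAB⟩ := (mem_quadPairs p.1).1 p.2
    simp only [Matrix.cons_val_zero, Matrix.cons_val_one]
    rw [← cls_symmDiff (hev hA) (hev hB), isQuad_cls (hev hA), isQuad_cls (hev hB),
      isQuad_cls (hev hAB)]
    exact ⟨hA, hB, hAB⟩
  · rintro ⟨⟨A, B⟩, hp⟩ ⟨⟨A', B'⟩, hp'⟩ h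
    obtain ⟨⟨⟨hA, hA7⟩, hB, hB7⟩, -⟩ := (mem_quadPairs _).1 hp
    obtain ⟨⟨⟨hA', hA7'⟩, hB', hB7'⟩, -⟩ := (mem_quadPairs _).1 hp'
    have h' := congrArg Subtype.val h
    obtain rfl := cls_inj (hev hA) (hev hA') hA7 hA7' (congrFun h' 0)
    obtain rfl := cls_inj (hev hB) (hev hB') hB7 hB7' (congrFun h' 1)
    rfl
  · rintro ⟨s, h0, h1, h01⟩
    obtain ⟨A, hA, hA7, hAs⟩ := exists_rep (s 0)
    obtain ⟨B, hB, hB7, hBs⟩ := exists_rep (s 1)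
    rw [← hAs, ← hBs, ← cls_symmDiff hA hB, isQuad_cls (even_symmDiff hA hB)] at h01
    rw [← hAs, isQuad_cls hA] at h0
    rw [← hBs, isQuad_cls hB] at h1
    refine ⟨⟨(A, B), (mem_quadPairs _).2 ⟨⟨⟨h0, hA7⟩, h1, hB7⟩, h01⟩⟩, Subtype.ext ?_⟩
    funext i
    fin_cases i
    · exact hAs
    · exact hBs

lemma span_range_of_basis {W : Submodule (ZMod 2) E3} (hW : Module.finrank (ZMod 2) W = 2)
    {s : Fin 2 → W} (hs : LinearIndependent (ZMod 2) s) :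
    span (ZMod 2) (Set.range fun i => (s i : E3)) = W := by
  have hs' : LinearIndependent (ZMod 2) fun i => (s i : E3) :=
    hs.map' W.subtype (Submodule.ker_subtype _)
  refine Submodule.eq_of_le_of_finrank_eq ?_ ?_
  · rw [span_le]
    rintro _ ⟨i, rfl⟩
    exact (s i).2
  · rw [finrank_span_eq_card hs', hW, Fintype.card_fin]

/-- Ordered bases of the planes in question, sorted by the plane they span. -/
def basesEquiv :
    (Σ W : {W : Submodule (ZMod 2) E3 //
        Module.finrank (ZMod 2) W = 2 ∧ ∀ x ∈ W, x ≠ 0 → ¬ hasRep 2 x},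
      {s : Fin 2 → W.1 // LinearIndependent (ZMod 2) s}) ≃
    {s : Fin 2 → E3 // LinearIndependent (ZMod 2) s ∧
      ∀ x ∈ span (ZMod 2) (Set.range s), x ≠ 0 → ¬ hasRep 2 x} := by
  refine Equiv.ofBijective (fun p => ⟨fun i => (p.2.1 i : E3), ?_, ?_⟩) ⟨?_, ?_⟩
  · exact p.2.2.map' p.1.1.subtype (Submodule.ker_subtype _)
  · rw [span_range_of_basis p.1.2.1 p.2.2]
    exact p.1.2.2
  · rintro ⟨⟨W, hW⟩, s, hs⟩ ⟨⟨W', hW'⟩, s', hs'⟩ h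
    have h' : (fun i => (s i : E3)) = fun i => (s' i : E3) := congrArg Subtype.val h
    have hWW' : W = W' := by
      rw [← span_range_of_basis hW.1 hs, ← span_range_of_basis hW'.1 hs', h']
    subst hWW'
    have hss' : s = s' := funext fun i => Subtype.ext (congrFun h' i)
    subst hss'
    rfl
  · rintro ⟨s, hs, hq⟩
    refine ⟨⟨⟨span (ZMod 2) (Set.range s), ?_, hq⟩,
      fun i => ⟨s i, subset_span ⟨i, rfl⟩⟩, ?_⟩, rfl⟩
    · simpa using finrank_span_eq_card hs
    · exact linearIndependent_span hs

/-- the number of 2-dimensional subspaces `W ⊆ E₃` none of whose nonzero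
elements has a 2-element representative equals 105 (Klein coverings of hyperelliptic
genus 3 curves of type II.1). -/
theorem statement9 :
    Nat.card {W : Submodule (ZMod 2) E3 //
      Module.finrank (ZMod 2) W = 2 ∧ ∀ x ∈ W, x ≠ 0 → ¬ hasRep 2 x} = 105 := by
  classical
  have : Finite E3 := Module.finite_of_finite (ZMod 2)
  have : Finite (Submodule (ZMod 2) E3) := Finite.of_injective _ SetLike.coe_injective
  let := Fintype.ofFinite {W : Submodule (ZMod 2) E3 //
      Module.finrank (ZMod 2) W = 2 ∧ ∀ x ∈ W, x ≠ 0 → ¬ hasRep 2 x}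
  have hcard := Nat.card_congr basesEquiv
  simp only [basis_iff] at hcard
  rw [card_pairs, Nat.card_sigma] at hcard
  have h6 : ∀ W : {W : Submodule (ZMod 2) E3 //
        Module.finrank (ZMod 2) W = 2 ∧ ∀ x ∈ W, x ≠ 0 → ¬ hasRep 2 x},
      Nat.card {s : Fin 2 → W.1 // LinearIndependent (ZMod 2) s} = 6 := by
    intro W
    rw [card_linearIndependent (by rw [W.2.1]), W.2.1]
    simp [Fin.prod_univ_two]
  simp only [h6] at hcard
  rw [Finset.sum_const, Finset.card_univ, smul_eq_mul, ← Nat.card_eq_fintype_card] at hcard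
  omega

end
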